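/- Let G be a finite group with G ∈ CD(G) whose commutator subgroup [G,G] is cyclic. Then CD(G) is a quasi-antichain of width w ≥ 3 with G ∈ CD(G) if and only if there exists a prime p such that |[G,G]| = p and G/Z(G) is an elementary abelian p-group of order p². In this case the width is w = p + 1. -/

import Mathlib

/-- The Chermak-Delgado measure of a subgroup `H` of a finite group `G`:
`m_G(H) = |H| · |C_G(H)|`. -/
noncomputable def CDmeasure {G : Type*} [Group G] (H : Subgroup G) : ℕ :=
  Nat.card H * Nat.card (Subgroup.centralizer (H : Set G))

/-- `H` belongs to the Chermak-Delgado lattice of `G`: its measure is maximal. -/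
def inCD {G : Type*} [Group G] (H : Subgroup G) : Prop :=
  ∀ K : Subgroup G, CDmeasure K ≤ CDmeasure H

/-- `CD(G)` is a quasi-antichain of width `w` with `G ∈ CD(G)`: `G` and `Z(G)`
are in `CD(G)`, every member of `CD(G)` lies between `Z(G)` and `G`, any two
comparable members strictly between `Z(G)` and `G` are equal, and there are
exactly `w` atoms. -/
def IsQACD (G : Type*) [Group G] (w : ℕ) : Prop :=
  inCD (⊤ : Subgroup G) ∧ inCD (Subgroup.center G) ∧
  (∀ K : Subgroup G, inCD K → Subgroup.center G ≤ K) ∧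
  (∀ K K' : Subgroup G, inCD K → inCD K' →
    Subgroup.center G < K → K ≤ K' → K' < ⊤ → K = K') ∧
  {K : Subgroup G | inCD K ∧ Subgroup.center G < K ∧ K < ⊤}.ncard = w


/-!
Put `Z = Z(G)` and let `CD(G)` be a quasi-antichain with three atoms. Members of `CD(G)` permute,
so two distinct atoms `K`, `L` satisfy `KL = G` and `K ∩ L = Z`. A proper subgroup is never
supplemented by one of its conjugates, hence the atoms are normal and `[K, L] ≤ Z`; three of them
force `G / Z` to be abelian. When `[G, G]` is moreover cyclic, the index of `C_G(x)` equals the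
order of `xZ`, so every `⟨x⟩Z` has the measure of `G`. Each atom is therefore generated over `Z`
by any of its elements outside `Z`, which gives it prime index over `Z`, and comparing three atoms
yields `|G : Z| = p²`.

Conversely, if `|G : Z| = p²` then every subgroup strictly between `Z` and `G` has order `p|Z|` and
is its own centralizer, so all the subgroups containing `Z` have the same measure.
-/

open Subgroup
open scoped Pointwise commutatorElement

section Subgroups

variable {G : Type*} [Group G] {H K N : Subgroup G}

theorem card_mul_relIndex (h : H ≤ K) : Nat.card H * H.relIndex K = Nat.card K := by
  simpa only [relIndex_bot_left] using relIndex_mul_relIndex ⊥ H K bot_le h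

theorem card_mul_mul_card_inf (H K : Subgroup G) :
    Nat.card ((H : Set G) * (K : Set G) : Set G) * Nat.card ↥(H ⊓ K) =
      Nat.card H * Nat.card K := by
  have orbit_eq : MulAction.orbit H ((1 : G) : G ⧸ K) = QuotientGroup.mk '' (H : Set G) := by
    rw [MulAction.orbit, Set.image_eq_range]
    exact congrArg Set.range (funext fun h => congrArg QuotientGroup.mk (mul_one (h : G)))
  have stabilizer_eq : MulAction.stabilizer H ((1 : G) : G ⧸ K) = K.subgroupOf H := by
    ext h
    exact SetLike.ext_iff.1 (MulAction.stabilizer_quotient K) (h : G)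
  have card_image : Nat.card (QuotientGroup.mk '' (H : Set G) : Set (G ⧸ K)) = K.relIndex H := by
    rw [← orbit_eq, Nat.card_coe_set_eq, ← MulAction.index_stabilizer, stabilizer_eq, relIndex]
  rw [card_mul_eq_card_subgroup_mul_card_quotient, card_image, mul_assoc, mul_comm (relIndex _ _),
    ← inf_relIndex_left, card_mul_relIndex inf_le_left, mul_comm]

theorem coe_mul_coe_subset_coe_sup (H K : Subgroup G) :
    (H : Set G) * (K : Set G) ⊆ ((H ⊔ K : Subgroup G) : Set G) :=
  Set.mul_subset_iff.2 fun _ hx _ hy => mul_mem_sup hx hy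

theorem eq_top_of_mul_conj_smul_eq_univ {g : G}
    (h : (H : Set G) * ((MulAut.conj g • H : Subgroup G) : Set G) = Set.univ) : H = ⊤ := by
  obtain ⟨a, ha, b, hb, hab⟩ := h.ge (Set.mem_univ g⁻¹)
  obtain ⟨c, hc, rfl⟩ := (mem_smul_pointwise_iff_exists _ _ _).1 hb
  have hg : g ∈ H := by
    have conj_eq : a * (g * c) * g⁻¹ = g⁻¹ := by
      simpa only [MulAut.smul_def, MulAut.conj_apply, mul_assoc] using hab
    have g_eq : g = a⁻¹ * c⁻¹ :=
      eq_mul_inv_iff_mul_eq.2 (eq_inv_of_mul_eq_one_right (mul_eq_right.1 conj_eq))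
    exact g_eq ▸ mul_mem (inv_mem ha) (inv_mem hc)
  rw [conj_smul_eq_self_of_mem hg] at h
  rw [← SetLike.coe_set_eq, coe_top, ← h, coe_mul_coe]

theorem relIndex_zpowers_sup (N : Subgroup G) [N.Normal] (x : G) :
    N.relIndex (zpowers x ⊔ N) = orderOf (x : G ⧸ N) := by
  rw [relIndex_sup_right, ← Nat.card_zpowers]
  conv_lhs => rw [← QuotientGroup.ker_mk' N]
  rw [relIndex_ker, MonoidHom.map_zpowers, QuotientGroup.coe_mk']

theorem centralizer_sup (H K : Subgroup G) :
    centralizer ((H ⊔ K : Subgroup G) : Set G) =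
      centralizer (H : Set G) ⊓ centralizer (K : Set G) :=
  eq_of_forall_le_iff fun L => by
    rw [le_inf_iff, le_centralizer_iff, sup_le_iff, le_centralizer_iff (H := L),
      le_centralizer_iff (H := L)]

theorem centralizer_sup_center (H : Subgroup G) :
    centralizer ((H ⊔ center G : Subgroup G) : Set G) = centralizer (H : Set G) := by
  rw [centralizer_sup, centralizer_center, inf_top_eq]

theorem centralizer_zpowers_sup_center (x : G) :
    centralizer ((zpowers x ⊔ center G : Subgroup G) : Set G) = centralizer {x} := by
  rw [centralizer_sup_center, zpowers_eq_closure, centralizer_closure]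

theorem centralizer_singleton_ne_top {x : G} (hx : x ∉ center G) : centralizer {x} ≠ ⊤ :=
  fun h => hx (Set.singleton_subset_iff.1 (centralizer_eq_top_iff_subset.1 h))

theorem zpowers_sup_center_le_centralizer (x : G) : zpowers x ⊔ center G ≤ centralizer {x} :=
  sup_le (zpowers_le.2 (mem_centralizer_singleton_iff.2 rfl)) (center_le_centralizer _)

theorem zpowers_sup_center_lt_top {x : G} (hx : x ∉ center G) : zpowers x ⊔ center G < ⊤ :=
  (zpowers_sup_center_le_centralizer x).trans_lt (centralizer_singleton_ne_top hx).lt_top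

theorem le_center_of_le_centralizer_of_sup_eq_top (hK : H ≤ centralizer (K : Set G))
    (hN : H ≤ centralizer (N : Set G)) (hKN : K ⊔ N = ⊤) : H ≤ center G := by
  rw [← centralizer_univ, ← coe_top, ← hKN, centralizer_sup]
  exact le_inf hK hN

theorem lt_zpowers_sup {x : G} (hx : x ∉ N) : N < zpowers x ⊔ N :=
  right_lt_sup.2 fun h => hx (zpowers_le.1 h)

theorem zpowers_sup_le {x : G} (hNK : N ≤ K) (hx : x ∈ K) : zpowers x ⊔ N ≤ K :=
  sup_le (zpowers_le.2 hx) hNK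

end Subgroups

section PrimeSquaredIndex

variable {G : Type*} [Group G] {N K L : Subgroup G} {p : ℕ}

theorem relIndex_eq_of_index_eq_prime_sq (hp : p.Prime) (hN : N.index = p ^ 2)
    (hNK : N < K) (hK : K < ⊤) : N.relIndex K = p :=
  ((hp.mul_eq_prime_sq_iff (fun h => hNK.not_ge (relIndex_eq_one.1 h))
    (fun h => hK.ne (index_eq_one.1 h))).1 ((relIndex_mul_index hNK.le).trans hN)).1

theorem eq_of_le_of_index_eq_prime_sq (hp : p.Prime) (hN : N.index = p ^ 2) (hNK : N < K)
    (hKL : K ≤ L) (hL : L < ⊤) : K = L := by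
  have relIndex_K := relIndex_eq_of_index_eq_prime_sq hp hN hNK (hKL.trans_lt hL)
  have relIndex_L := relIndex_eq_of_index_eq_prime_sq hp hN (hNK.trans_le hKL) hL
  have mul_eq : p * K.relIndex L = p := by
    simpa only [relIndex_K, relIndex_L] using relIndex_mul_relIndex N K L hNK.le hKL
  exact le_antisymm hKL (relIndex_eq_one.1 ((mul_eq_left₀ hp.ne_zero).1 mul_eq))

theorem zpowers_sup_eq_of_index_eq_prime_sq (hp : p.Prime) (hN : N.index = p ^ 2)
    (hNK : N < K) (hK : K < ⊤) {x : G} (hxK : x ∈ K) (hxN : x ∉ N) : zpowers x ⊔ N = K :=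
  eq_of_le_of_index_eq_prime_sq hp hN (lt_zpowers_sup hxN) (zpowers_sup_le hNK.le hxK) hK

theorem fiber_zpowers_sup_of_index_eq_prime_sq (hp : p.Prime) (hN : N.index = p ^ 2)
    (hNK : N < K) (hK : K < ⊤) : {x | x ∉ N ∧ zpowers x ⊔ N = K} = (K : Set G) \ N := by
  ext x
  constructor
  · rintro ⟨hxN, rfl⟩
    exact ⟨mem_sup_left (mem_zpowers x), hxN⟩
  · rintro ⟨hxK, hxN⟩
    exact ⟨hxN, zpowers_sup_eq_of_index_eq_prime_sq hp hN hNK hK hxK hxN⟩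

theorem ncard_sdiff_of_index_eq_prime_sq [Finite G] (hp : p.Prime) (hN : N.index = p ^ 2)
    (hNK : N < K) (hK : K < ⊤) : ((K : Set G) \ N).ncard = (p - 1) * Nat.card N := by
  have card_K : Nat.card N * p = Nat.card K := by
    rw [← card_mul_relIndex hNK.le, relIndex_eq_of_index_eq_prime_sq hp hN hNK hK]
  rw [Set.ncard_sdiff hNK.le, Nat.sub_one_mul, mul_comm p, card_K]
  rfl

-- `x ↦ zpowers x ⊔ N` maps the `(p² - 1)|N|` elements outside `N` onto the subgroups in
-- question, with all fibres of size `(p - 1)|N|`.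
theorem ncard_Ioo_of_index_eq_prime_sq [Finite G] (hp : p.Prime) (hN : N.index = p ^ 2)
    (hx : ∀ x ∉ N, zpowers x ⊔ N ≠ ⊤) : (Set.Ioo N ⊤).ncard = p + 1 := by
  classical
  have := Fintype.ofFinite G
  have := Fintype.ofFinite (Subgroup G)
  have card_fiber : ∀ K ∈ (Set.Ioo N ⊤).toFinset,
      {x ∈ ((N : Set G)ᶜ).toFinset | zpowers x ⊔ N = K}.card = (p - 1) * Nat.card N := by
    intro K hK
    obtain ⟨hNK, hK⟩ := Set.mem_toFinset.1 hK
    rw [← ncard_sdiff_of_index_eq_prime_sq hp hN hNK hK,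
      ← fiber_zpowers_sup_of_index_eq_prime_sq hp hN hNK hK, ← Set.ncard_coe_finset]
    simp
  have card_compl : ((N : Set G)ᶜ).ncard = (Set.Ioo N ⊤).ncard * ((p - 1) * Nat.card N) := by
    rw [Set.ncard_eq_toFinset_card', Set.ncard_eq_toFinset_card', ← smul_eq_mul,
      ← Finset.sum_const, ← Finset.sum_congr rfl card_fiber]
    refine Finset.card_eq_sum_card_fiberwise fun x hxN => ?_
    simp only [Set.coe_toFinset, Set.mem_compl_iff, SetLike.mem_coe] at hxN ⊢
    exact ⟨lt_zpowers_sup hxN, (hx x hxN).lt_top⟩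
  have card_add : Nat.card N + ((N : Set G)ᶜ).ncard = Nat.card N * p ^ 2 := by
    rw [← hN, card_mul_index]
    exact Set.ncard_add_ncard_compl (N : Set G)
  obtain ⟨q, rfl⟩ := Nat.exists_eq_add_of_lt hp.one_lt
  have card_pos : 0 < (1 + q) * Nat.card N := Nat.mul_pos (by lia) Nat.card_pos
  rw [card_compl] at card_add
  refine Nat.eq_of_mul_eq_mul_right card_pos ?_
  rw [show 1 + q + 1 - 1 = 1 + q by lia] at card_add
  linarith

end PrimeSquaredIndex

section ClassTwo

variable {G : Type*} [Group G]

/-- In a group of nilpotency class at most two, the homomorphism `y ↦ ⁅x, y⁆` into the commutator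
subgroup. -/
def commutatorHom (h : commutator G ≤ center G) (x : G) : G →* commutator G where
  toFun y := ⟨⁅x, y⁆, commutator_mem_commutator (mem_top x) (mem_top y)⟩
  map_one' := Subtype.ext (commutatorElement_one_right x)
  map_mul' y z := Subtype.ext <| by
    have comm : y * ⁅x, z⁆ = ⁅x, z⁆ * y :=
      mem_center_iff.1 (h (commutator_mem_commutator (mem_top x) (mem_top z))) y
    simp only [Subgroup.coe_mul]
    rw [commutatorElement_mul_right_eq_mul_conj, mul_assoc ⁅x, y⁆, comm, ← mul_assoc,
      mul_inv_cancel_right]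

theorem ker_commutatorHom (h : commutator G ≤ center G) (x : G) :
    (commutatorHom h x).ker = centralizer {x} := by
  ext y
  rw [mem_centralizer_iff_commutator_eq_one, MonoidHom.mem_ker, Subtype.ext_iff]
  simp only [Set.mem_singleton_iff, forall_eq]
  rfl

theorem commutatorElement_pow_right (h : commutator G ≤ center G) (x y : G) (n : ℕ) :
    ⁅x, y ^ n⁆ = ⁅x, y⁆ ^ n :=
  congrArg Subtype.val (map_pow (commutatorHom h x) y n)

theorem commutatorElement_pow_left (h : commutator G ≤ center G) (x y : G) (n : ℕ) :
    ⁅x ^ n, y⁆ = ⁅x, y⁆ ^ n := by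
  rw [← commutatorElement_inv y, commutatorElement_pow_right h, ← inv_pow, commutatorElement_inv]

theorem mem_center_iff_forall_commutatorElement_eq_one {x : G} :
    x ∈ center G ↔ ∀ y : G, ⁅x, y⁆ = 1 := by
  simp only [mem_center_iff, commutatorElement_eq_one_iff_mul_comm, eq_comm]

theorem index_centralizer_singleton [IsCyclic (commutator G)] (h : commutator G ≤ center G)
    (x : G) : (centralizer {x}).index = orderOf (x : G ⧸ center G) := by
  rw [← ker_commutatorHom h, index_ker, ← IsCyclic.exponent_eq_card]
  refine Nat.dvd_right_iff_eq.1 fun n => ?_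
  rw [Monoid.exponent_dvd_iff_forall_pow_eq_one, orderOf_dvd_iff_pow_eq_one,
    ← QuotientGroup.mk_pow, QuotientGroup.eq_one_iff,
    mem_center_iff_forall_commutatorElement_eq_one]
  simp only [commutatorElement_pow_left h, (commutatorHom h x).rangeRestrict_surjective.forall,
    Subtype.ext_iff]
  rfl

theorem exponent_commutator_dvd (h : commutator G ≤ center G) :
    Monoid.exponent (commutator G) ∣ Monoid.exponent (G ⧸ center G) := by
  have commutatorElement_pow (x y : G) : ⁅x, y⁆ ^ Monoid.exponent (G ⧸ center G) = 1 := by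
    rw [← commutatorElement_pow_left h]
    refine mem_center_iff_forall_commutatorElement_eq_one.1 ?_ y
    rw [← QuotientGroup.eq_one_iff, QuotientGroup.mk_pow, Monoid.pow_exponent_eq_one]
  refine Monoid.exponent_dvd_of_forall_pow_eq_one fun ⟨c, hc⟩ => Subtype.ext ?_
  simp only [SubmonoidClass.coe_pow, OneMemClass.coe_one]
  rw [commutator_eq_closure] at h hc
  induction hc using closure_induction with
  | mem c hc => obtain ⟨x, y, rfl⟩ := hc; exact commutatorElement_pow x y
  | one => exact one_pow _
  | mul c d _ hd hc_pow hd_pow =>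
    rw [Commute.mul_pow (mem_center_iff.1 (h hd) c), hc_pow, hd_pow, one_mul]
  | inv c _ hc_pow => rw [inv_pow, hc_pow, inv_one]

end ClassTwo

section Measure

variable {G : Type*} [Group G] {H K : Subgroup G}

theorem CDmeasure_top : CDmeasure (⊤ : Subgroup G) = Nat.card G * Nat.card (center G) := by
  rw [CDmeasure, card_top, coe_top, centralizer_univ]

theorem CDmeasure_center : CDmeasure (center G) = Nat.card G * Nat.card (center G) := by
  rw [CDmeasure, centralizer_center, card_top, mul_comm]

theorem CDmeasure_zpowers_sup_center [IsCyclic (commutator G)] (h : commutator G ≤ center G)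
    (x : G) : CDmeasure (zpowers x ⊔ center G) = Nat.card G * Nat.card (center G) := by
  rw [CDmeasure, centralizer_zpowers_sup_center, ← card_mul_index (centralizer {x}),
    index_centralizer_singleton h, ← relIndex_zpowers_sup,
    ← card_mul_relIndex (le_sup_right : center G ≤ zpowers x ⊔ center G)]
  ring

theorem CDmeasure_le_CDmeasure_sup_center [Finite G] (H : Subgroup G) :
    CDmeasure H ≤ CDmeasure (H ⊔ center G) := by
  rw [CDmeasure, CDmeasure, centralizer_sup_center]
  exact Nat.mul_le_mul_right _ (card_le_of_le le_sup_left)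

theorem CDmeasure_pos [Finite G] (H : Subgroup G) : 0 < CDmeasure H :=
  Nat.mul_pos Nat.card_pos Nat.card_pos

theorem CDmeasure_mul_le [Finite G] (H K : Subgroup G) :
    CDmeasure H * CDmeasure K ≤
      Nat.card ((H : Set G) * (K : Set G) : Set G) *
        Nat.card (centralizer ((H ⊔ K : Subgroup G) : Set G)) * CDmeasure (H ⊓ K) := by
  have centralizer_mul_subset :
      (centralizer (H : Set G) : Set G) * (centralizer (K : Set G) : Set G) ⊆
        centralizer ((H ⊓ K : Subgroup G) : Set G) :=
    Set.mul_subset_iff.2 fun x hx y hy =>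
      mul_mem (centralizer_le inf_le_left hx) (centralizer_le inf_le_right hy)
  have card_mul_le := Nat.card_mono (Set.toFinite _) centralizer_mul_subset
  calc
    CDmeasure H * CDmeasure K =
        (Nat.card H * Nat.card K) *
          (Nat.card (centralizer (H : Set G)) * Nat.card (centralizer (K : Set G))) :=
      mul_mul_mul_comm ..
    _ = Nat.card ((H : Set G) * (K : Set G) : Set G) *
        Nat.card (centralizer ((H ⊔ K : Subgroup G) : Set G)) *
          (Nat.card ↥(H ⊓ K) * Nat.card
            ((centralizer (H : Set G) : Set G) * (centralizer (K : Set G) : Set G) : Set G)) := by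
      rw [← card_mul_mul_card_inf H, ← card_mul_mul_card_inf (centralizer _), centralizer_sup]
      ring
    _ ≤ _ := Nat.mul_le_mul_left _ (Nat.mul_le_mul_left _ card_mul_le)

theorem inCD.center_le [Finite G] (h : inCD H) : center G ≤ H := by
  have le := h (H ⊔ center G)
  rw [CDmeasure, CDmeasure, centralizer_sup_center] at le
  exact sup_eq_left.1
    (eq_of_le_of_card_ge le_sup_left (Nat.le_of_mul_le_mul_right le Nat.card_pos)).symm

theorem inCD_zpowers_sup_center [IsCyclic (commutator G)] (h : commutator G ≤ center G)
    (hG : inCD (⊤ : Subgroup G)) (x : G) : inCD (zpowers x ⊔ center G) := fun K => by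
  rw [CDmeasure_zpowers_sup_center h, ← CDmeasure_top]
  exact hG K

theorem inCD.CDmeasure_le_card_mul_mul [Finite G] (hK : inCD K) (H : Subgroup G) :
    CDmeasure H ≤ Nat.card ((H : Set G) * (K : Set G) : Set G) *
      Nat.card (centralizer ((H ⊔ K : Subgroup G) : Set G)) := by
  refine Nat.le_of_mul_le_mul_right ?_ (CDmeasure_pos K)
  exact (CDmeasure_mul_le H K).trans (Nat.mul_le_mul_left _ (hK (H ⊓ K)))

theorem inCD.sup [Finite G] (hH : inCD H) (hK : inCD K) : inCD (H ⊔ K) := fun L =>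
  (hH L).trans <| (hK.CDmeasure_le_card_mul_mul H).trans <|
    Nat.mul_le_mul_right _ (Nat.card_mono (Set.toFinite _) (coe_mul_coe_subset_coe_sup H K))

theorem inCD.coe_mul_coe_eq_coe_sup [Finite G] (hH : inCD H) (hK : inCD K) :
    (H : Set G) * (K : Set G) = ((H ⊔ K : Subgroup G) : Set G) := by
  refine Set.eq_of_subset_of_ncard_le (coe_mul_coe_subset_coe_sup H K) ?_
  exact Nat.le_of_mul_le_mul_right
    ((hH (H ⊔ K)).trans (hK.CDmeasure_le_card_mul_mul H)) Nat.card_pos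

theorem inCD.inf [Finite G] (hH : inCD H) (hK : inCD K) : inCD (H ⊓ K) := fun L => by
  refine (hK L).trans (Nat.le_of_mul_le_mul_left ?_ (CDmeasure_pos H))
  refine (CDmeasure_mul_le H K).trans (Nat.mul_le_mul_right _ ?_)
  rw [hH.coe_mul_coe_eq_coe_sup hK]
  exact hH (H ⊔ K)

theorem centralizer_smul (φ : MulAut G) (H : Subgroup G) :
    centralizer ((φ • H : Subgroup G) : Set G) = φ • centralizer (H : Set G) := by
  ext x
  simp only [mem_pointwise_smul_iff_inv_smul_mem, mem_centralizer_iff, coe_pointwise_smul,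
    Set.mem_smul_set_iff_inv_smul_mem, SetLike.mem_coe]
  refine (MulAction.toPerm φ⁻¹).forall_congr fun g => imp_congr_right fun _ => ?_
  simp only [MulAction.toPerm_apply, ← smul_mul', smul_left_cancel_iff]

theorem CDmeasure_smul (φ : MulAut G) (H : Subgroup G) : CDmeasure (φ • H) = CDmeasure H := by
  rw [CDmeasure, CDmeasure, centralizer_smul, ← Nat.card_congr (equivSMul φ H).toEquiv,
    ← Nat.card_congr (equivSMul φ _).toEquiv]

theorem inCD.smul (φ : MulAut G) (hH : inCD H) : inCD (φ • H) := fun K => by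
  rw [CDmeasure_smul]
  exact hH K

end Measure

section Atoms

variable {G : Type*} [Group G] {H K L : Subgroup G} {w : ℕ}

/-- `K` is a member of `CD(G)` strictly between `Z(G)` and `G`; when `CD(G)` is a quasi-antichain
these are its atoms. -/
structure IsCDAtom (K : Subgroup G) : Prop where
  mem : inCD K
  center_lt : center G < K
  lt_top : K < ⊤

theorem IsCDAtom.smul (hK : IsCDAtom K) (g : G) : IsCDAtom (MulAut.conj g • K) := by
  have smul_lt {A B : Subgroup G} (h : A < B) : MulAut.conj g • A < MulAut.conj g • B := by
    simpa only [lt_iff_le_not_ge, pointwise_smul_le_pointwise_smul_iff] using h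
  refine ⟨hK.mem.smul _, ?_, ?_⟩
  · simpa only [Normal.conj_smul_eq_self] using smul_lt hK.center_lt
  · simpa only [Normal.conj_smul_eq_self] using smul_lt hK.lt_top

namespace IsQACD

theorem ncard_isCDAtom (hQ : IsQACD G w) : {K : Subgroup G | IsCDAtom K}.ncard = w := by
  rw [← hQ.2.2.2.2]
  congr 1 with K
  exact ⟨fun ⟨mem, center_lt, lt_top⟩ => ⟨mem, center_lt, lt_top⟩,
    fun ⟨mem, center_lt, lt_top⟩ => ⟨mem, center_lt, lt_top⟩⟩

theorem eq_of_le (hQ : IsQACD G w) (hK : IsCDAtom K) (hL : IsCDAtom L) (h : K ≤ L) : K = L :=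
  hQ.2.2.2.1 K L hK.mem hL.mem hK.center_lt h hL.lt_top

theorem zpowers_sup_center_eq [IsCyclic (commutator G)] (hQ : IsQACD G w)
    (h : commutator G ≤ center G) (hK : IsCDAtom K) {x : G} (hxK : x ∈ K)
    (hx : x ∉ center G) : zpowers x ⊔ center G = K := by
  have le : zpowers x ⊔ center G ≤ K := zpowers_sup_le hK.center_lt.le hxK
  have atom_zpowers_sup : IsCDAtom (zpowers x ⊔ center G) :=
    ⟨inCD_zpowers_sup_center h hQ.1 x, lt_zpowers_sup hx, le.trans_lt hK.lt_top⟩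
  exact hQ.eq_of_le atom_zpowers_sup hK le

variable [Finite G]

theorem inf_eq_center (hQ : IsQACD G w) (hK : IsCDAtom K) (hL : IsCDAtom L) (h : K ≠ L) :
    K ⊓ L = center G := by
  by_contra hne
  have atom_inf : IsCDAtom (K ⊓ L) :=
    ⟨hK.mem.inf hL.mem, (le_inf hK.center_lt.le hL.center_lt.le).lt_of_ne' hne,
      inf_le_left.trans_lt hK.lt_top⟩
  exact h ((hQ.eq_of_le atom_inf hK inf_le_left).symm.trans
    (hQ.eq_of_le atom_inf hL inf_le_right))

theorem sup_eq_top (hQ : IsQACD G w) (hK : IsCDAtom K) (hL : IsCDAtom L) (h : K ≠ L) :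
    K ⊔ L = ⊤ := by
  by_contra hne
  have atom_sup : IsCDAtom (K ⊔ L) :=
    ⟨hK.mem.sup hL.mem, hK.center_lt.trans_le le_sup_left, lt_top_iff_ne_top.2 hne⟩
  exact h ((hQ.eq_of_le hK atom_sup le_sup_left).trans
    (hQ.eq_of_le hL atom_sup le_sup_right).symm)

theorem mul_eq_univ (hQ : IsQACD G w) (hK : IsCDAtom K) (hL : IsCDAtom L) (h : K ≠ L) :
    (K : Set G) * (L : Set G) = Set.univ := by
  rw [hK.mem.coe_mul_coe_eq_coe_sup hL.mem, hQ.sup_eq_top hK hL h, coe_top]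

theorem relIndex_center_mul_relIndex_center (hQ : IsQACD G w) (hK : IsCDAtom K)
    (hL : IsCDAtom L) (h : K ≠ L) :
    (center G).relIndex K * (center G).relIndex L = (center G).index := by
  have card_mul := card_mul_mul_card_inf K L
  rw [hQ.mul_eq_univ hK hL h, hQ.inf_eq_center hK hL h, Nat.card_univ,
    ← card_mul_index (center G), ← card_mul_relIndex hK.center_lt.le,
    ← card_mul_relIndex hL.center_lt.le] at card_mul
  have card_pos : 0 < Nat.card (center G) * Nat.card (center G) :=
    Nat.mul_pos Nat.card_pos Nat.card_pos
  refine Nat.eq_of_mul_eq_mul_left card_pos ?_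
  linarith

theorem normal (hQ : IsQACD G w) (hK : IsCDAtom K) : K.Normal := by
  refine Normal.of_conjugate_fixed fun g => ?_
  by_contra hne
  exact hK.lt_top.ne (eq_top_of_mul_conj_smul_eq_univ
    (hQ.mul_eq_univ hK (hK.smul g) (Ne.symm hne)))

theorem commutator_le_center_of_ne (hQ : IsQACD G w) (hK : IsCDAtom K) (hL : IsCDAtom L)
    (h : K ≠ L) : ⁅K, L⁆ ≤ center G := by
  have := hQ.normal hK
  have := hQ.normal hL
  exact (commutator_le_inf K L).trans (hQ.inf_eq_center hK hL h).le

theorem commutator_le_center (hQ : IsQACD G w) (hH : IsCDAtom H) (hK : IsCDAtom K)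
    (hL : IsCDAtom L) (hHK : H ≠ K) (hHL : H ≠ L) (hKL : K ≠ L) :
    commutator G ≤ center G := by
  set π := QuotientGroup.mk' (center G)
  have le_centralizer {A B : Subgroup G} (hA : IsCDAtom A) (hB : IsCDAtom B) (h : A ≠ B) :
      A.map π ≤ centralizer (B.map π) := by
    rw [← commutator_eq_bot_iff_le_centralizer, ← map_commutator, Subgroup.map_eq_bot_iff,
      QuotientGroup.ker_mk']
    exact hQ.commutator_le_center_of_ne hA hB h
  have map_sup {A B : Subgroup G} (hA : IsCDAtom A) (hB : IsCDAtom B) (h : A ≠ B) :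
      A.map π ⊔ B.map π = ⊤ := by
    rw [← Subgroup.map_sup, hQ.sup_eq_top hA hB h,
      map_top_of_surjective _ (QuotientGroup.mk'_surjective _)]
  have H_le : H.map π ≤ center (G ⧸ center G) :=
    le_center_of_le_centralizer_of_sup_eq_top (le_centralizer hH hK hHK)
      (le_centralizer hH hL hHL) (map_sup hK hL hKL)
  have K_le : K.map π ≤ center (G ⧸ center G) :=
    le_center_of_le_centralizer_of_sup_eq_top (le_centralizer hK hH hHK.symm)
      (le_centralizer hK hL hKL) (map_sup hH hL hHL)
  rw [← Normal.quotient_commutative_iff_commutator_le, ← center_eq_top_iff]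
  exact top_le_iff.1 ((map_sup hH hK hHK).ge.trans (sup_le H_le K_le))

theorem prime_relIndex_center [IsCyclic (commutator G)] (hQ : IsQACD G w)
    (h : commutator G ≤ center G) (hK : IsCDAtom K) : ((center G).relIndex K).Prime := by
  have relIndex_ne_one : (center G).relIndex K ≠ 1 := fun h =>
    hK.center_lt.not_ge (relIndex_eq_one.1 h)
  have orderOf_eq {y : G} (hyK : y ∈ K) (hy : y ∉ center G) :
      orderOf (y : G ⧸ center G) = (center G).relIndex K := by
    rw [← relIndex_zpowers_sup, hQ.zpowers_sup_center_eq h hK hyK hy]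
  obtain ⟨x, hxK, hx⟩ := SetLike.exists_of_lt hK.center_lt
  set q := ((center G).relIndex K).minFac
  have q_prime : q.Prime := Nat.minFac_prime relIndex_ne_one
  have orderOf_pow : orderOf ((x ^ (orderOf (x : G ⧸ center G) / q) : G) : G ⧸ center G) = q := by
    rw [QuotientGroup.mk_pow, orderOf_pow_orderOf_div (orderOf_pos _).ne']
    exact orderOf_eq hxK hx ▸ Nat.minFac_dvd _
  have pow_notMem : x ^ (orderOf (x : G ⧸ center G) / q) ∉ center G := fun hmem => by
    rw [(QuotientGroup.eq_one_iff _).2 hmem, orderOf_one] at orderOf_pow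
    exact q_prime.ne_one orderOf_pow.symm
  rwa [← orderOf_eq (pow_mem hxK _) pow_notMem, orderOf_pow]

theorem exists_index_center_eq_prime_sq [IsCyclic (commutator G)] (hQ : IsQACD G w) (hw : 3 ≤ w) :
    ∃ p : ℕ, p.Prime ∧ (center G).index = p ^ 2 := by
  obtain ⟨H, hH, K, hK, L, hL, hHK, hHL, hKL⟩ :
      ∃ H, IsCDAtom H ∧ ∃ K, IsCDAtom K ∧ ∃ L, IsCDAtom L ∧ H ≠ K ∧ H ≠ L ∧ K ≠ L :=
    (Set.two_lt_ncard (Set.toFinite _)).1 (hw.trans hQ.ncard_isCDAtom.ge)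
  have commutator_le := hQ.commutator_le_center hH hK hL hHK hHL hKL
  have p_prime := hQ.prime_relIndex_center commutator_le hH
  have index_eq := hQ.relIndex_center_mul_relIndex_center hH hK hHK
  have relIndex_KL : (center G).relIndex K = (center G).relIndex L :=
    Nat.eq_of_mul_eq_mul_left p_prime.pos
      (index_eq.trans (hQ.relIndex_center_mul_relIndex_center hH hL hHL).symm)
  have relIndex_HK : (center G).relIndex H = (center G).relIndex K := by
    refine Nat.eq_of_mul_eq_mul_right (hQ.prime_relIndex_center commutator_le hK).pos ?_
    rw [index_eq, ← hQ.relIndex_center_mul_relIndex_center hK hL hKL, relIndex_KL]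
  exact ⟨_, p_prime, by rw [← index_eq, ← relIndex_HK, sq]⟩

end IsQACD

end Atoms

section CenterOfPrimeSquaredIndex

variable {G : Type*} [Group G] {K : Subgroup G} {p : ℕ}

theorem isMulCommutative_quotient_center_of_index_center_eq_prime_sq (hp : p.Prime)
    (hZ : (center G).index = p ^ 2) : IsMulCommutative (G ⧸ center G) :=
  have := Fact.mk hp
  IsPGroup.isMulCommutative_of_card_eq_prime_sq hZ

theorem commutator_le_center_of_index_center_eq_prime_sq (hp : p.Prime)
    (hZ : (center G).index = p ^ 2) : commutator G ≤ center G :=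
  Normal.quotient_commutative_iff_commutator_le.1
    (isMulCommutative_quotient_center_of_index_center_eq_prime_sq hp hZ)

theorem mk_pow_eq_one_of_index_center_eq_prime_sq (hp : p.Prime) (hZ : (center G).index = p ^ 2)
    (x : G) : (x : G ⧸ center G) ^ p = 1 := by
  by_cases hx : x ∈ center G
  · rw [(QuotientGroup.eq_one_iff x).2 hx, one_pow]
  · rw [← orderOf_dvd_iff_pow_eq_one, ← relIndex_zpowers_sup,
      relIndex_eq_of_index_eq_prime_sq hp hZ (lt_zpowers_sup hx)
        (zpowers_sup_center_lt_top hx)]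

theorem card_commutator_of_index_center_eq_prime_sq [IsCyclic (commutator G)] (hp : p.Prime)
    (hZ : (center G).index = p ^ 2) : Nat.card (commutator G) = p := by
  have card_dvd : Nat.card (commutator G) ∣ p := by
    rw [← IsCyclic.exponent_eq_card]
    have commutator_le := commutator_le_center_of_index_center_eq_prime_sq hp hZ
    refine (exponent_commutator_dvd commutator_le).trans ?_
    rw [Monoid.exponent_dvd_iff_forall_pow_eq_one]
    exact QuotientGroup.mk_surjective.forall.2 (mk_pow_eq_one_of_index_center_eq_prime_sq hp hZ)
  refine ((Nat.dvd_prime hp).1 card_dvd).resolve_left fun h => ?_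
  rw [card_eq_one, commutator_eq_bot_iff_center_eq_top] at h
  rw [h, index_top] at hZ
  exact (Nat.one_lt_pow two_ne_zero hp.one_lt).ne hZ

theorem centralizer_eq_self_of_index_center_eq_prime_sq (hp : p.Prime)
    (hZ : (center G).index = p ^ 2) (hZK : center G < K) (hK : K < ⊤) :
    centralizer (K : Set G) = K := by
  obtain ⟨x, hxK, hx⟩ := SetLike.exists_of_lt hZK
  rw [← zpowers_sup_eq_of_index_eq_prime_sq hp hZ hZK hK hxK hx, centralizer_zpowers_sup_center]
  exact (eq_of_le_of_index_eq_prime_sq hp hZ (lt_zpowers_sup hx)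
    (zpowers_sup_center_le_centralizer x) (centralizer_singleton_ne_top hx).lt_top).symm

theorem CDmeasure_of_index_center_eq_prime_sq (hp : p.Prime) (hZ : (center G).index = p ^ 2)
    (hZK : center G ≤ K) : CDmeasure K = Nat.card G * Nat.card (center G) := by
  rcases hZK.eq_or_lt with rfl | hZK
  · exact CDmeasure_center
  rcases (le_top : K ≤ ⊤).eq_or_lt with rfl | hK
  · exact CDmeasure_top
  have relIndex_eq := relIndex_eq_of_index_eq_prime_sq hp hZ hZK hK
  rw [CDmeasure, centralizer_eq_self_of_index_center_eq_prime_sq hp hZ hZK hK,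
    ← card_mul_index (center G), ← card_mul_relIndex hZK.le, relIndex_eq, hZ]
  ring

variable [Finite G]

theorem inCD_of_index_center_eq_prime_sq (hp : p.Prime) (hZ : (center G).index = p ^ 2)
    (hZK : center G ≤ K) : inCD K := fun H => by
  rw [CDmeasure_of_index_center_eq_prime_sq hp hZ hZK,
    ← CDmeasure_of_index_center_eq_prime_sq hp hZ (le_sup_right : center G ≤ H ⊔ center G)]
  exact CDmeasure_le_CDmeasure_sup_center H

theorem isQACD_of_index_center_eq_prime_sq (hp : p.Prime) (hZ : (center G).index = p ^ 2) :
    IsQACD G (p + 1) := by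
  have inCD_of_le {K : Subgroup G} (hZK : center G ≤ K) : inCD K :=
    inCD_of_index_center_eq_prime_sq hp hZ hZK
  refine ⟨inCD_of_le le_top, inCD_of_le le_rfl, fun K hK => hK.center_le, fun K L _ _ =>
    eq_of_le_of_index_eq_prime_sq hp hZ, ?_⟩
  have atoms_eq : {K : Subgroup G | inCD K ∧ center G < K ∧ K < ⊤} = Set.Ioo (center G) ⊤ :=
    Set.ext fun K => ⟨And.right, fun hK => ⟨inCD_of_le hK.1.le, hK⟩⟩
  rw [atoms_eq]
  exact ncard_Ioo_of_index_eq_prime_sq hp hZ fun x hx => (zpowers_sup_center_lt_top hx).ne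

end CenterOfPrimeSquaredIndex

theorem stmt7_general {G : Type*} [Group G] [Finite G] (hcyc : IsCyclic (commutator G)) :
    ((∃ w : ℕ, 3 ≤ w ∧ IsQACD G w) ↔
      ∃ p : ℕ, p.Prime ∧ Nat.card (commutator G) = p ∧
        (∀ x y : G ⧸ Subgroup.center G, x * y = y * x) ∧
        (∀ x : G ⧸ Subgroup.center G, x ^ p = 1) ∧
        Nat.card (G ⧸ Subgroup.center G) = p ^ 2) ∧
    (∀ w p : ℕ, 3 ≤ w → IsQACD G w → p.Prime → Nat.card (commutator G) = p →
      w = p + 1) := by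
  refine ⟨⟨fun ⟨w, hw, hQ⟩ => ?_, fun ⟨p, hp, _, _, _, hZ⟩ => ?_⟩, fun w p hw hQ _ hcard => ?_⟩
  · obtain ⟨p, hp, hZ⟩ := hQ.exists_index_center_eq_prime_sq hw
    have := isMulCommutative_quotient_center_of_index_center_eq_prime_sq hp hZ
    exact ⟨p, hp, card_commutator_of_index_center_eq_prime_sq hp hZ, mul_comm',
      QuotientGroup.mk_surjective.forall.2 (mk_pow_eq_one_of_index_center_eq_prime_sq hp hZ), hZ⟩
  · exact ⟨p + 1, Nat.succ_le_succ hp.two_le, isQACD_of_index_center_eq_prime_sq hp hZ⟩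
  · obtain ⟨q, hq, hZ⟩ := hQ.exists_index_center_eq_prime_sq hw
    have hQ' := isQACD_of_index_center_eq_prime_sq hq hZ
    rw [← hcard, card_commutator_of_index_center_eq_prime_sq hq hZ, ← hQ.ncard_isCDAtom,
      hQ'.ncard_isCDAtom]

/-- if `G ∈ CD(G)` and `[G,G]` is cyclic, then `CD(G)` is a
quasi-antichain of width `w ≥ 3` with `G ∈ CD(G)` if and only if there is a
prime `p` with `|[G,G]| = p` and `G/Z(G)` elementary abelian of order `p²`;
in this case `w = p + 1`. -/
theorem stmt7 {G : Type*} [Group G] [Finite G]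
    (hG : inCD (⊤ : Subgroup G)) (hcyc : IsCyclic (commutator G)) :
    ((∃ w : ℕ, 3 ≤ w ∧ IsQACD G w) ↔
      ∃ p : ℕ, p.Prime ∧ Nat.card (commutator G) = p ∧
        (∀ x y : G ⧸ Subgroup.center G, x * y = y * x) ∧
        (∀ x : G ⧸ Subgroup.center G, x ^ p = 1) ∧
        Nat.card (G ⧸ Subgroup.center G) = p ^ 2) ∧
    (∀ w p : ℕ, 3 ≤ w → IsQACD G w → p.Prime → Nat.card (commutator G) = p →
      w = p + 1) :=
  stmt7_general hcyc
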